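/- arXiv:1411.6243 — 5 statements merged into one kernel-verified Lean document; each statement's English description precedes it below -/
import Mathlib

section
/- Let F be a real inner product space, let L₁, …, L_N : F → ℝ be convex differentiable functions, let λ > 0 and let m, n be positive reals. Suppose f minimizes g ↦ (1/(mn)) Σ_{j=1}^N L_j(g) + (λ/2)‖g‖₂² over F, and for some index i′ ∈ {1,…,N}, f' minimizes g ↦ (1/(mn)) Σ_{j≠i′} L_j(g) + (λ/2)‖g‖₂² over F. Then λ‖f − f'‖₂² ≤ (1/(mn)) (L_{i′}(f') − L_{i′}(f)). (Key inequality, equations (13)–(17), in the proof of the stability Theorem.) -/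
open scoped BigOperators

theorem strong_min_aux {F : Type*} [NormedAddCommGroup F] [InnerProductSpace ℝ F]
    (G : F → ℝ) (lam : ℝ) (hlam : 0 < lam) (hG : ConvexOn ℝ Set.univ G) (f : F)
    (hf : ∀ g : F, G f + lam / 2 * ‖f‖ ^ 2 ≤ G g + lam / 2 * ‖g‖ ^ 2) (g : F) :
    lam / 2 * ‖f - g‖ ^ 2 ≤ (G g + lam / 2 * ‖g‖ ^ 2) - (G f + lam / 2 * ‖f‖ ^ 2) := by
  have key : ∀ t : ℝ, 0 < t → t < 1 → (1 - t) * (lam / 2 * ‖f - g‖ ^ 2)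
      ≤ (G g + lam / 2 * ‖g‖ ^ 2) - (G f + lam / 2 * ‖f‖ ^ 2) := by
    intro t h0 h1
    have a1 := hf ((1 - t) • f + t • g)
    have a2 := hG.2 (Set.mem_univ f) (Set.mem_univ g) (by linarith : 0 ≤ 1 - t) h0.le (by ring)
    simp only [smul_eq_mul] at a2
    have a3 : ‖(1 - t) • f + t • g‖ ^ 2
        = (1 - t) * ‖f‖ ^ 2 + t * ‖g‖ ^ 2 - t * (1 - t) * ‖f - g‖ ^ 2 := by
      rw [norm_add_sq_real, norm_sub_sq_real, norm_smul, norm_smul, real_inner_smul_left,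
        real_inner_smul_right, mul_pow, mul_pow, Real.norm_eq_abs, Real.norm_eq_abs, sq_abs, sq_abs]
      ring
    rw [a3] at a1
    refine le_of_mul_le_mul_left ?_ h0
    linarith
  have hB := hf g
  generalize (G g + lam / 2 * ‖g‖ ^ 2) - (G f + lam / 2 * ‖f‖ ^ 2) = B at *
  have hA : 0 ≤ lam / 2 * ‖f - g‖ ^ 2 := by positivity
  generalize lam / 2 * ‖f - g‖ ^ 2 = A at *
  refine le_of_tendsto (f := fun t : ℝ => (1 - t) * A) (x := nhdsWithin 0 (Set.Ioi 0)) ?_ ?_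
  · have : Continuous fun t : ℝ => (1 - t) * A := by fun_prop
    simpa using (this.tendsto 0).mono_left nhdsWithin_le_nhds
  · filter_upwards [Ioo_mem_nhdsGT (zero_lt_one' ℝ)] with t ht using key t ht.1 ht.2

/-- **Key inequality (equations (13)–(17)) in the proof of the stability theorem.**
Let `F` be a real inner product space, `L j : F → ℝ` convex differentiable
functions (`j = 1, …, N`), `lam > 0` and `m, n` positive reals.  If `f`
minimizes `g ↦ (1/(m*n)) * ∑ j, L j g + (lam/2) * ‖g‖²` and `f'` minimizes the
same objective with the single term `i'` removed, then
`lam * ‖f - f'‖² ≤ (1/(m*n)) * (L i' f' - L i' f)`. -/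
theorem minimizer_key_inequality
    {F : Type*} [NormedAddCommGroup F] [InnerProductSpace ℝ F]
    {N : ℕ} (L : Fin N → F → ℝ) (lam m n : ℝ)
    (hlam : 0 < lam) (hm : 0 < m) (hn : 0 < n)
    (hconv : ∀ j, ConvexOn ℝ Set.univ (L j))
    (hdiff : ∀ j, Differentiable ℝ (L j))
    (i' : Fin N) (f f' : F)
    (hf : ∀ g : F,
      1 / (m * n) * ∑ j, L j f + lam / 2 * ‖f‖ ^ 2
        ≤ 1 / (m * n) * ∑ j, L j g + lam / 2 * ‖g‖ ^ 2)
    (hf' : ∀ g : F,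
      1 / (m * n) * ∑ j ∈ Finset.univ.erase i', L j f' + lam / 2 * ‖f'‖ ^ 2
        ≤ 1 / (m * n) * ∑ j ∈ Finset.univ.erase i', L j g + lam / 2 * ‖g‖ ^ 2) :
    lam * ‖f - f'‖ ^ 2 ≤ 1 / (m * n) * (L i' f' - L i' f) := by
  have hc : 0 ≤ 1 / (m * n) := by positivity
  have conv : ∀ s : Finset (Fin N),
      ConvexOn ℝ Set.univ (fun g => 1 / (m * n) * ∑ j ∈ s, L j g) := by
    intro s
    have h : ConvexOn ℝ Set.univ (fun g => ∑ j ∈ s, L j g) := by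
      induction s using Finset.induction_on with
      | empty => simpa using convexOn_const (0 : ℝ) (convex_univ (𝕜 := ℝ) (E := F))
      | insert a s ha ih =>
        simp only [Finset.sum_insert ha]
        exact (hconv a).add ih
    exact h.smul hc
  have e1 := strong_min_aux _ lam hlam (conv Finset.univ) f hf f'
  have e2 := strong_min_aux _ lam hlam (conv (Finset.univ.erase i')) f' hf' f
  rw [norm_sub_rev f' f] at e2
  simp only [← Finset.add_sum_erase _ _ (Finset.mem_univ i')] at e1
  linarith
end

section
/- (Theorem 2: Stability vs. structure regularization.) Under the structure regularization framework, assume each sample-wise loss L_τ(·, z′_j) is convex and differentiable on F, f(x,k) is ρ-admissible, the point-wise cost is τ-smooth, and every feature value is bounded by v (|x_(k,q)| ≤ v for all coordinates q ∈ {1,…,d}, for all inputs considered). Then the function stability Δ of the minimizer f compared with f^{∖i′} is bounded: for every sample z = (x, y) of structure complexity n (with feature values bounded by v) and every position k, |f(x, k) − f^{∖i′}(x, k)| ≤ dτρ²v²n² / (mλα²). -/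
open scoped BigOperators

theorem aux_strong {F : Type*} [NormedAddCommGroup F] [InnerProductSpace ℝ F]
    (G : F → ℝ) (hG : ConvexOn ℝ Set.univ G) (lam : ℝ) (hlam : 0 < lam) (f : F)
    (hf : ∀ g, G f + lam / 2 * ‖f‖ ^ 2 ≤ G g + lam / 2 * ‖g‖ ^ 2) (g : F) :
    G f + lam / 2 * ‖f‖ ^ 2 + lam / 2 * ‖f - g‖ ^ 2 ≤ G g + lam / 2 * ‖g‖ ^ 2 := by
  have key : ∀ t : ℝ, 0 < t → t < 1 → (lam / 2 * ‖f - g‖ ^ 2) * (1 - t) ≤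
      (G g + lam / 2 * ‖g‖ ^ 2) - (G f + lam / 2 * ‖f‖ ^ 2) := by
    intro t h0 h1
    have a := hf ((1 - t) • f + t • g)
    have b := hG.2 (Set.mem_univ f) (Set.mem_univ g) (by linarith : 0 ≤ 1 - t) h0.le (by ring)
    have c : ‖(1 - t) • f + t • g‖ ^ 2
        = (1 - t) * ‖f‖ ^ 2 + t * ‖g‖ ^ 2 - t * (1 - t) * ‖f - g‖ ^ 2 := by
      rw [norm_add_sq_real, norm_sub_sq_real, norm_smul, norm_smul, real_inner_smul_left,
        real_inner_smul_right, mul_pow, mul_pow, Real.norm_eq_abs, Real.norm_eq_abs, sq_abs, sq_abs]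
      ring
    rw [c] at a
    simp only [smul_eq_mul] at b
    refine le_of_mul_le_mul_left ?_ h0
    nlinarith
  generalize hB : (G g + lam / 2 * ‖g‖ ^ 2) - (G f + lam / 2 * ‖f‖ ^ 2) = B at key
  have hc : 0 ≤ lam / 2 * ‖f - g‖ ^ 2 := by positivity
  generalize lam / 2 * ‖f - g‖ ^ 2 = c at key hc
  suffices c ≤ B by linarith
  by_contra! h
  have hB0 : 0 ≤ B := by
    have := key (1/2) (by norm_num) (by norm_num)
    linarith
  have hc0 : 0 < c := by linarith
  have := key ((c - B) / (2 * c)) (by apply div_pos <;> linarith)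
    (by rw [div_lt_one (by linarith)]; linarith)
  have e : c * (1 - (c - B) / (2 * c)) = (c + B) / 2 := by field_simp; ring
  linarith

theorem aux_norm (d t : ℕ) (v : ℝ) (x : Fin t → EuclideanSpace ℝ (Fin d))
    (h : ∀ k q, |x k q| ≤ v) : ‖∑ k, x k‖ ≤ t * (Real.sqrt d * |v|) := by
  have h1 : ∀ k, ‖x k‖ ≤ Real.sqrt d * |v| := by
    intro k
    rw [EuclideanSpace.norm_eq, ← Real.sqrt_sq_eq_abs, ← Real.sqrt_mul (by positivity)]
    apply Real.sqrt_le_sqrt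
    calc ∑ q, ‖x k q‖ ^ 2 ≤ ∑ _q : Fin d, v ^ 2 := by
          apply Finset.sum_le_sum
          intro q _
          rw [Real.norm_eq_abs]
          exact pow_le_pow_left₀ (abs_nonneg _) (h k q) 2
      _ = d * v ^ 2 := by simp
  calc ‖∑ k, x k‖ ≤ ∑ k, ‖x k‖ := norm_sum_le _ _
    _ ≤ ∑ _k : Fin t, (Real.sqrt d * |v|) := Finset.sum_le_sum fun k _ => h1 k
    _ = _ := by simp

/-- **Theorem 2 (Stability vs. structure regularization).**
Under the structure regularization framework, with convex differentiable
sample-wise losses, a `ρ`-admissible evaluation, a `τ`-smooth point-wise cost,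
and all feature values bounded by `v`, the function stability of the minimizer
`f` compared with the minimizer `fminus` obtained by removing a single
mini-sample term `i'` is bounded:  for every sample `(x, y)` of structure
complexity `n` with feature values bounded by `v` and every position `k`,
`|f(x,k) - fminus(x,k)| ≤ d * τ * ρ² * v² * n² / (m * lam * α²)`. -/
theorem function_stability_structure_regularization
    {F : Type*} [NormedAddCommGroup F] [InnerProductSpace ℝ F]
    (d m α n n' : ℕ) (hm : 0 < m) (hα : 0 < α) (hn : 0 < n)
    (hdiv : n = α * n')
    (eval : F → (t : ℕ) → (Fin t → EuclideanSpace ℝ (Fin d)) → Fin t → ℝ)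
    (ρ : ℝ) (hρ : 0 ≤ ρ)
    (hadm : ∀ (g g' : F) (t : ℕ) (x : Fin t → EuclideanSpace ℝ (Fin d)) (k : Fin t),
      |eval g t x k - eval g' t x k| ≤ ρ * ‖g - g'‖ * ‖∑ k', x k'‖)
    (cτ : ℝ → ℝ → ℝ) (τ : ℝ)
    (hsmooth : ∀ y₁ y₂ ystar : ℝ, |cτ y₁ ystar - cτ y₂ ystar| ≤ τ * |y₁ - y₂|)
    (hcost_convex : ∀ ystar : ℝ, ConvexOn ℝ Set.univ (fun y : ℝ => cτ y ystar))
    (v : ℝ)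
    (x' : Fin m × Fin α → Fin n' → EuclideanSpace ℝ (Fin d))
    (y' : Fin m × Fin α → Fin n' → ℝ)
    (hval : ∀ (p : Fin m × Fin α) (k : Fin n') (q : Fin d), |x' p k q| ≤ v)
    (hconv : ∀ p : Fin m × Fin α,
      ConvexOn ℝ Set.univ (fun g : F => ∑ k, cτ (eval g n' (x' p) k) (y' p k)))
    (hdiff : ∀ p : Fin m × Fin α,
      Differentiable ℝ (fun g : F => ∑ k, cτ (eval g n' (x' p) k) (y' p k)))
    (lam : ℝ) (hlam : 0 < lam)
    (f : F)
    (hf : ∀ g : F,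
      1 / ((m : ℝ) * n) * ∑ p : Fin m × Fin α, ∑ k, cτ (eval f n' (x' p) k) (y' p k)
          + lam / 2 * ‖f‖ ^ 2
        ≤ 1 / ((m : ℝ) * n) * ∑ p : Fin m × Fin α, ∑ k, cτ (eval g n' (x' p) k) (y' p k)
          + lam / 2 * ‖g‖ ^ 2)
    (i' : Fin m × Fin α) (fminus : F)
    (hfminus : ∀ g : F,
      1 / ((m : ℝ) * n) * ∑ p ∈ Finset.univ.erase i', ∑ k, cτ (eval fminus n' (x' p) k) (y' p k)
          + lam / 2 * ‖fminus‖ ^ 2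
        ≤ 1 / ((m : ℝ) * n) * ∑ p ∈ Finset.univ.erase i', ∑ k, cτ (eval g n' (x' p) k) (y' p k)
          + lam / 2 * ‖g‖ ^ 2) :
    ∀ (x : Fin n → EuclideanSpace ℝ (Fin d)),
      (∀ (k : Fin n) (q : Fin d), |x k q| ≤ v) →
      ∀ k : Fin n,
        |eval f n x k - eval fminus n x k|
          ≤ (d : ℝ) * τ * ρ ^ 2 * v ^ 2 * (n : ℝ) ^ 2 / ((m : ℝ) * lam * (α : ℝ) ^ 2) := by
  intro x hx k
  have hτ : 0 ≤ τ := by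
    have := (abs_nonneg _).trans (hsmooth 1 0 0)
    simpa using this
  have hm' : (0 : ℝ) < m := by exact_mod_cast hm
  have hn' : (0 : ℝ) < n := by exact_mod_cast hn
  have hα' : (0 : ℝ) < α := by exact_mod_cast hα
  have hdiv' : (n : ℝ) = α * n' := by exact_mod_cast hdiv
  have hn2 : (0 : ℝ) < n' := by
    by_contra! h
    nlinarith
  have hw : (0 : ℝ) ≤ 1 / ((m : ℝ) * n) := by positivity
  set L : Fin m × Fin α → F → ℝ := fun p g => ∑ k, cτ (eval g n' (x' p) k) (y' p k) with hL
  have hconvS : ∀ s : Finset (Fin m × Fin α),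
      ConvexOn ℝ Set.univ (fun g => 1 / ((m : ℝ) * n) * ∑ p ∈ s, L p g) := by
    intro s
    have hs : ConvexOn ℝ Set.univ (fun g => ∑ p ∈ s, L p g) := by
      refine ⟨convex_univ, fun a _ b _ u w hu hw huw => ?_⟩
      simp only [smul_eq_mul, Finset.mul_sum, ← Finset.sum_add_distrib]
      apply Finset.sum_le_sum
      intro p _
      simpa using (hconv p).2 (Set.mem_univ a) (Set.mem_univ b) hu hw huw
    simpa only [smul_eq_mul] using hs.smul hw
  have s1 := aux_strong _ (hconvS Finset.univ) lam hlam f hf fminus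
  have s2 := aux_strong _ (hconvS (Finset.univ.erase i')) lam hlam fminus hfminus f
  have e1 := Finset.add_sum_erase Finset.univ (fun p => L p f) (Finset.mem_univ i')
  have e2 := Finset.add_sum_erase Finset.univ (fun p => L p fminus) (Finset.mem_univ i')
  beta_reduce at s1 s2 e1 e2
  rw [← e1, ← e2] at s1
  rw [norm_sub_rev fminus f] at s2
  have s3 : lam * ‖f - fminus‖ ^ 2 ≤ 1 / ((m : ℝ) * n) * (L i' fminus - L i' f) := by
    rw [mul_add, mul_add] at s1
    rw [mul_sub]
    linarith
  have hX := aux_norm d n' v (x' i') (hval i')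
  have hX2 := aux_norm d n v x hx
  have s4 : L i' fminus - L i' f
      ≤ n' * (τ * (ρ * ‖f - fminus‖ * (n' * (Real.sqrt d * |v|)))) := by
    rw [hL]
    simp only
    rw [← Finset.sum_sub_distrib]
    calc _ ≤ ∑ _k : Fin n', (τ * (ρ * ‖f - fminus‖ * (n' * (Real.sqrt d * |v|)))) := by
          apply Finset.sum_le_sum
          intro k _
          refine (le_abs_self _).trans ((hsmooth _ _ _).trans ?_)
          refine mul_le_mul_of_nonneg_left ?_ hτ
          refine (hadm _ _ _ _ _).trans ?_
          rw [norm_sub_rev fminus f]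
          exact mul_le_mul_of_nonneg_left hX (by positivity)
      _ = _ := by simp
  have hD : ‖f - fminus‖ ≤ 1 / ((m : ℝ) * n) * (n' * (τ * (ρ * (n' * (Real.sqrt d * |v|))))) / lam := by
    rcases (norm_nonneg (f - fminus)).eq_or_lt with h0 | h0
    · rw [← h0]; positivity
    · rw [le_div_iff₀ hlam]
      refine le_of_mul_le_mul_left ?_ h0
      have := s3.trans (mul_le_mul_of_nonneg_left s4 hw)
      calc _ = lam * ‖f - fminus‖ ^ 2 := by ring
        _ ≤ _ := this
        _ = _ := by ring
  have hsd : Real.sqrt d ^ 2 = d := Real.sq_sqrt (by positivity)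
  calc _ ≤ ρ * ‖f - fminus‖ * ‖∑ k', x k'‖ := hadm _ _ _ _ _
    _ ≤ ρ * (1 / ((m : ℝ) * n) * (n' * (τ * (ρ * (n' * (Real.sqrt d * |v|))))) / lam)
        * (n * (Real.sqrt d * |v|)) := by gcongr
    _ = Real.sqrt d ^ 2 * τ * ρ ^ 2 * |v| ^ 2 * (n' : ℝ) ^ 2 / (m * lam) := by
        field_simp
    _ = _ := by
        rw [hsd, sq_abs, hdiv']
        field_simp
end

section
/- (Equation (3) in the proof of Theorem 3: bounded differences.) Let G be a learning algorithm with function stability Δ̄ with respect to removal of a sample, let the point-wise cost c_τ be τ-smooth, and assume 0 ≤ ℓ_τ(G_S, z, k) ≤ γ. Then the map S ↦ R(G_S) − R_e(G_S) has bounded differences: for every training set S of size m, every index i, and every replacement sample ẑ_i, |[R(G_S) − R_e(G_S)] − [R(G_{S^i}) − R_e(G_{S^i})]| ≤ ((4m−2)τΔ̄ + γ)/m. -/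
open MeasureTheory
open scoped BigOperators

/-- The sample-wise loss `L(gS, z) = ∑_{k} c(gS(x,k), y_(k))` of a prediction
function `gS` on a sample `z = (x, y)` of structure complexity `n`. -/
noncomputable def sampleLoss {X : Type*} {n : ℕ} (c : ℝ → ℝ → ℝ)
    (gS : X → Fin n → ℝ) (z : X × (Fin n → ℝ)) : ℝ :=
  ∑ k, c (gS z.1 k) (z.2 k)

/-- The generalization risk `R(gS) = E_{z∼D}[(1/n) L(gS, z)]`. -/
noncomputable def genRisk {X : Type*} [MeasurableSpace X] {n : ℕ}
    (D : Measure (X × (Fin n → ℝ))) (c : ℝ → ℝ → ℝ)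
    (gS : X → Fin n → ℝ) : ℝ :=
  ∫ z, (1 / (n : ℝ)) * sampleLoss c gS z ∂D

/-- The empirical risk `R_e(gS) = (1/(m n)) ∑_{i=1}^m L(gS, z_i)` of a
prediction function `gS` on a training set `S` of size `m`. -/
noncomputable def empRisk {X : Type*} {n m : ℕ} (c : ℝ → ℝ → ℝ)
    (gS : X → Fin n → ℝ) (S : Fin m → X × (Fin n → ℝ)) : ℝ :=
  (1 / ((m : ℝ) * n)) * ∑ i, sampleLoss c gS (S i)

/-- **Equation (3) in the proof of Theorem 3 (bounded differences).**
If `G` has function stability `Δbar` with respect to removal of a sample, the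
point-wise cost `cτ` is `τ`-smooth, and `0 ≤ ℓτ(G_S, z, k) ≤ γ`, then the map
`S ↦ R(G_S) − R_e(G_S)` has bounded differences: for every training set `S`
of size `m`, every index `i` and every replacement sample `ẑᵢ`,
`|[R(G_S) − R_e(G_S)] − [R(G_{Sⁱ}) − R_e(G_{Sⁱ})]| ≤ ((4m−2)τΔbar + γ)/m`. -/
theorem generalization_gap_bounded_differences
    {X : Type*} [MeasurableSpace X] {n m : ℕ} (hn : 0 < n) (hm : 0 < m)
    (D : Measure (X × (Fin n → ℝ))) [IsProbabilityMeasure D]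
    (G : (Fin m → X × (Fin n → ℝ)) → X → Fin n → ℝ)
    (Gminus : (Fin m → X × (Fin n → ℝ)) → Fin m → X → Fin n → ℝ)
    (cτ : ℝ → ℝ → ℝ) (τ Δbar : ℝ)
    (hGminus : ∀ (S : Fin m → X × (Fin n → ℝ)) (i : Fin m) (z : X × (Fin n → ℝ)),
      Gminus (Function.update S i z) i = Gminus S i)
    (hstab : ∀ (S : Fin m → X × (Fin n → ℝ)) (i : Fin m) (x : X) (k : Fin n),
      |G S x k - Gminus S i x k| ≤ Δbar)
    (hsmooth : ∀ y₁ y₂ ystar : ℝ, |cτ y₁ ystar - cτ y₂ ystar| ≤ τ * |y₁ - y₂|)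
    (γ : ℝ)
    (hbound : ∀ (S : Fin m → X × (Fin n → ℝ)) (z : X × (Fin n → ℝ)) (k : Fin n),
      0 ≤ cτ (G S z.1 k) (z.2 k) ∧ cτ (G S z.1 k) (z.2 k) ≤ γ)
    (hIntG : ∀ S : Fin m → X × (Fin n → ℝ),
      Integrable (fun z => sampleLoss cτ (G S) z) D)
    (hIntGm : ∀ (S : Fin m → X × (Fin n → ℝ)) (i : Fin m),
      Integrable (fun z => sampleLoss cτ (Gminus S i) z) D)
 :
    ∀ (S : Fin m → X × (Fin n → ℝ)) (i : Fin m) (zhat : X × (Fin n → ℝ)),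
      |(genRisk D cτ (G S) - empRisk cτ (G S) S)
        - (genRisk D cτ (G (Function.update S i zhat))
            - empRisk cτ (G (Function.update S i zhat)) (Function.update S i zhat))|
        ≤ ((4 * (m : ℝ) - 2) * τ * Δbar + γ) / (m : ℝ) := by
  intro S i zhat
  set S' := Function.update S i zhat with hS'
  have hn' : (0:ℝ) < n := by exact_mod_cast hn
  have hm' : (0:ℝ) < m := by exact_mod_cast hm
  have hτ : 0 ≤ τ := by
    have h := hsmooth 1 0 0
    have h0 := abs_nonneg (cτ 1 0 - cτ 0 0)
    norm_num at h
    linarith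
  have hpt : ∀ x k, |G S x k - G S' x k| ≤ 2 * Δbar := by
    intro x k
    have h1 := hstab S i x k
    have h2 := hstab S' i x k
    rw [hS', hGminus S i zhat, ← hS'] at h2
    rw [abs_le] at *
    constructor <;> linarith [h1.1, h1.2, h2.1, h2.2]
  have hL : ∀ z, |sampleLoss cτ (G S) z - sampleLoss cτ (G S') z| ≤ n * (2 * τ * Δbar) := by
    intro z
    unfold sampleLoss
    rw [← Finset.sum_sub_distrib]
    refine (Finset.abs_sum_le_sum_abs _ _).trans ?_
    have h : ∀ k ∈ (Finset.univ : Finset (Fin n)),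
        |cτ (G S z.1 k) (z.2 k) - cτ (G S' z.1 k) (z.2 k)| ≤ 2 * τ * Δbar := by
      intro k _
      refine (hsmooth _ _ _).trans ?_
      have := mul_le_mul_of_nonneg_left (hpt z.1 k) hτ
      linarith
    have := Finset.sum_le_card_nsmul _ _ _ h
    simpa using this
  have hB : ∀ T z, 0 ≤ sampleLoss cτ (G T) z ∧ sampleLoss cτ (G T) z ≤ n * γ := by
    intro T z
    refine ⟨Finset.sum_nonneg fun k _ => (hbound T z k).1, ?_⟩
    have := Finset.sum_le_card_nsmul (Finset.univ : Finset (Fin n)) _ _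
      (fun k _ => (hbound T z k).2)
    simpa [sampleLoss] using this
  have hR : |genRisk D cτ (G S) - genRisk D cτ (G S')| ≤ 2 * τ * Δbar := by
    unfold genRisk
    rw [← integral_sub ((hIntG S).const_mul _) ((hIntG S').const_mul _)]
    have := norm_integral_le_of_norm_le_const (μ := D) (C := 2 * τ * Δbar)
      (f := fun z => 1 / (n:ℝ) * sampleLoss cτ (G S) z - 1 / (n:ℝ) * sampleLoss cτ (G S') z)
      (Filter.Eventually.of_forall fun z => by
        rw [Real.norm_eq_abs, ← mul_sub, abs_mul, abs_of_pos (by positivity : 0 < 1 / (n:ℝ)),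
          one_div, inv_mul_le_iff₀ hn']
        exact hL z)
    simpa using this
  have hE : |∑ j, sampleLoss cτ (G S) (S j) - ∑ j, sampleLoss cτ (G S') (S' j)|
      ≤ (m - 1) * (n * (2 * τ * Δbar)) + n * γ := by
    rw [← Finset.sum_sub_distrib, ← Finset.sum_erase_add _ _ (Finset.mem_univ i)]
    refine (abs_add_le _ _).trans (add_le_add ?_ ?_)
    · refine (Finset.abs_sum_le_sum_abs _ _).trans ?_
      have h : ∀ j ∈ Finset.univ.erase i,
          |sampleLoss cτ (G S) (S j) - sampleLoss cτ (G S') (S' j)| ≤ n * (2 * τ * Δbar) := by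
        intro j hj
        have : S' j = S j := Function.update_of_ne (Finset.ne_of_mem_erase hj) _ _
        rw [this]
        exact hL _
      have := Finset.sum_le_card_nsmul _ _ _ h
      rw [Finset.card_erase_of_mem (Finset.mem_univ i), nsmul_eq_mul, Finset.card_univ,
        Fintype.card_fin, Nat.cast_sub hm] at this
      simpa using this
    · have h1 := hB S (S i)
      have h2 := hB S' (S' i)
      rw [abs_le]
      constructor <;> linarith [h1.1, h1.2, h2.1, h2.2]
  have hE2 : |empRisk cτ (G S) S - empRisk cτ (G S') S'|
      ≤ ((m - 1) * (2 * τ * Δbar) + γ) / m := by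
    unfold empRisk
    rw [← mul_sub, abs_mul, abs_of_pos (by positivity : 0 < 1 / ((m:ℝ) * n))]
    refine (mul_le_mul_of_nonneg_left hE (by positivity)).trans (le_of_eq ?_)
    field_simp
  have hfin : ((4 * (m : ℝ) - 2) * τ * Δbar + γ) / (m : ℝ)
      = 2 * τ * Δbar + ((m - 1) * (2 * τ * Δbar) + γ) / m := by
    field_simp
    ring
  rw [hfin]
  rw [abs_le] at *
  constructor <;> linarith [hR.1, hR.2, hE2.1, hE2.2]
end

section
/- (Equation (5) in the proof of Theorem 3: exponential tail bound.) Let G be a symmetric learning algorithm with function stability Δ̄ with respect to removal of a sample, let the point-wise cost c_τ be τ-smooth, assume 0 ≤ ℓ_τ(G_S, z, k) ≤ γ with γ > 0, and let S be drawn i.i.d. of size m from D. Then for every ε > 0: P_S( R(G_S) − R_e(G_S) ≥ 2τΔ̄ + ε ) ≤ exp( −2mε² / ((4m−2)τΔ̄ + γ)² ). -/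
open MeasureTheory
open scoped BigOperators

lemma aux_hoeffding {Z : Type*} [MeasurableSpace Z] (μ : Measure Z) [IsProbabilityMeasure μ]
    (g : Z → ℝ) (hg : Measurable g) (c : ℝ) (hc : ∀ z z', g z - g z' ≤ c) (t : ℝ) :
    ∫ z, Real.exp (t * (g z - ∫ w, g w ∂μ)) ∂μ ≤ Real.exp ((c / 2) ^ 2 * t ^ 2 / 2) := by
  have hne : Nonempty Z := by
    by_contra h
    rw [not_nonempty_iff] at h
    have := measure_univ (μ := μ)
    rw [Set.eq_empty_of_isEmpty (Set.univ : Set Z)] at this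
    simp at this
  obtain ⟨z0⟩ := hne
  have hbdd : BddBelow (Set.range g) := ⟨g z0 - c, by
    rintro _ ⟨z, rfl⟩
    linarith [hc z0 z]⟩
  have hmem : ∀ z, g z ∈ Set.Icc (⨅ w, g w) ((⨅ w, g w) + c) := by
    intro z
    refine ⟨ciInf_le hbdd z, ?_⟩
    have : Nonempty Z := ⟨z0⟩
    have : g z - c ≤ ⨅ w, g w := le_ciInf fun w => by linarith [hc z w]
    linarith
  have h := (ProbabilityTheory.hasSubgaussianMGF_of_mem_Icc (μ := μ) hg.aemeasurable
    (Filter.Eventually.of_forall hmem)).mgf_le t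
  unfold ProbabilityTheory.mgf at h
  refine h.trans (le_of_eq ?_)
  congr 1
  simp [div_pow]

lemma aux_integrable {Z : Type*} [MeasurableSpace Z] (μ : Measure Z) [IsProbabilityMeasure μ]
    (f : Z → ℝ) (hf : Measurable f) (B : ℝ) (hB : ∀ z, |f z| ≤ B) : Integrable f μ :=
  Integrable.of_bound hf.aestronglyMeasurable B (Filter.Eventually.of_forall hB)

lemma aux_cons {Z : Type*} [MeasurableSpace Z] (m : ℕ) (z : Z) (S : Fin m → Z) :
    (MeasurableEquiv.piFinSuccAbove (fun _ : Fin (m + 1) => Z) 0).symm (z, S)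
      = (Fin.cons z S : Fin (m + 1) → Z) := by
  rw [MeasurableEquiv.piFinSuccAbove_symm_apply]
  simp [Fin.insertNthEquiv]

lemma aux_split {Z : Type*} [MeasurableSpace Z] (μ : Measure Z) [IsProbabilityMeasure μ]
    (m : ℕ) (F : (Fin (m + 1) → Z) → ℝ) (hF : Measurable F) (B : ℝ) (hB : ∀ S, |F S| ≤ B) :
    ∫ S, F S ∂(Measure.pi fun _ : Fin (m + 1) => μ)
      = ∫ z, ∫ S, F (Fin.cons z S) ∂(Measure.pi fun _ : Fin m => μ) ∂μ := by
  rw [← ((measurePreserving_piFinSuccAbove (fun _ : Fin (m + 1) => μ) 0).symm).integral_comp']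
  rw [integral_prod]
  · simp only [aux_cons]
  · exact aux_integrable _ _ (hF.comp (MeasurableEquiv.measurable _)) B fun _ => hB _

lemma aux_cons_meas {Z : Type*} [MeasurableSpace Z] (m : ℕ) :
    Measurable (fun p : Z × (Fin m → Z) => (Fin.cons p.1 p.2 : Fin (m + 1) → Z)) := by
  have h := (MeasurableEquiv.piFinSuccAbove (fun _ : Fin (m + 1) => Z) 0).symm.measurable
  have h2 : (fun p : Z × (Fin m → Z) => (Fin.cons p.1 p.2 : Fin (m + 1) → Z)) =
      (MeasurableEquiv.piFinSuccAbove (fun _ : Fin (m + 1) => Z) 0).symm := by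
    funext p
    exact (aux_cons m p.1 p.2).symm
  rw [h2]
  exact h

lemma aux_mcdiarmid {Z : Type*} [MeasurableSpace Z] (μ : Measure Z) [IsProbabilityMeasure μ]
    (c B t : ℝ) (m : ℕ) : ∀ (f : (Fin m → Z) → ℝ), Measurable f → (∀ S, |f S| ≤ B) →
    (∀ S i z, f (Function.update S i z) - f S ≤ c) →
    ∫ S, Real.exp (t * (f S - ∫ w, f w ∂(Measure.pi fun _ : Fin m => μ)))
        ∂(Measure.pi fun _ : Fin m => μ) ≤ Real.exp (m * ((c / 2) ^ 2 * t ^ 2 / 2)) := by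
  induction m with
  | zero =>
    intro f hf hB hc
    have : ∀ S, f S = f default := fun S => by rw [Subsingleton.elim S default]
    simp [this]
  | succ m ih =>
    intro f hf hB hc
    set P := Measure.pi fun _ : Fin m => μ with hP
    set E := ∫ w, f w ∂(Measure.pi fun _ : Fin (m + 1) => μ) with hE
    set g : Z → ℝ := fun z => ∫ S, f (Fin.cons z S) ∂P with hg
    have hfc : Measurable (fun p : Z × (Fin m → Z) => f (Fin.cons p.1 p.2)) :=
      hf.comp (aux_cons_meas m)
    have hfz : ∀ z, Measurable (fun S : Fin m → Z => f (Fin.cons z S)) := fun z =>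
      hfc.comp measurable_prodMk_left
    have hint : ∀ z, Integrable (fun S : Fin m → Z => f (Fin.cons z S)) P := fun z =>
      aux_integrable _ _ (hfz z) B fun _ => hB _
    have hgm : Measurable g :=
      (StronglyMeasurable.integral_prod_right (f := fun z S => f (Fin.cons z S)) (ν := P)
        hfc.stronglyMeasurable).measurable
    have hEg : E = ∫ z, g z ∂μ := aux_split μ m f hf B hB
    have hgB : ∀ z, |g z| ≤ B := fun z => by
      have := norm_integral_le_of_norm_le_const (μ := P) (f := fun S => f (Fin.cons z S)) (C := B)
        (Filter.Eventually.of_forall fun S => hB _)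
      simpa using this
    have hgosc : ∀ z z', g z - g z' ≤ c := by
      intro z z'
      rw [hg]
      simp only
      rw [← integral_sub (hint z) (hint z')]
      calc _ ≤ ∫ S, c ∂P := by
            apply integral_mono ((hint z).sub (hint z')) (integrable_const c)
            intro S
            have := hc (Fin.cons z' S) 0 z
            rw [Fin.update_cons_zero] at this
            exact this
        _ = c := by simp
    have hEB : |E| ≤ B := by
      have := norm_integral_le_of_norm_le_const (μ := Measure.pi fun _ : Fin (m + 1) => μ)
        (f := f) (C := B) (Filter.Eventually.of_forall fun S => hB _)
      simpa using this
    have hexpb : ∀ x y : ℝ, |x| ≤ B → |y| ≤ B → |Real.exp (t * (x - y))| ≤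
        Real.exp (|t| * (2 * B)) := by
      intro x y hx hy
      rw [abs_of_pos (Real.exp_pos _), Real.exp_le_exp]
      calc t * (x - y) ≤ |t| * |x - y| := by rw [← abs_mul]; exact le_abs_self _
        _ ≤ _ := by
          gcongr
          have := abs_sub x y
          linarith
    rw [aux_split μ m (fun S => Real.exp (t * (f S - E)))
      (((hf.sub_const E).const_mul t).exp) (Real.exp (|t| * (2 * B)))
      (fun S => hexpb _ _ (hB S) hEB)]
    have hstep : ∀ z, ∫ S, Real.exp (t * (f (Fin.cons z S) - E)) ∂P ≤
        Real.exp (t * (g z - E)) * Real.exp (m * ((c / 2) ^ 2 * t ^ 2 / 2)) := by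
      intro z
      have h1 := ih (fun S => f (Fin.cons z S)) (hfz z) (fun _ => hB _) (by
        intro S i w
        have := hc (Fin.cons z S) i.succ w
        rw [← Fin.cons_update] at this
        exact this)
      have h2 : ∀ S : Fin m → Z, Real.exp (t * (f (Fin.cons z S) - E)) =
          Real.exp (t * (g z - E)) * Real.exp (t * (f (Fin.cons z S) - g z)) := by
        intro S
        rw [← Real.exp_add]
        congr 1
        ring
      simp_rw [h2]
      rw [integral_const_mul]
      exact mul_le_mul_of_nonneg_left h1 (Real.exp_pos _).le
    have hh := aux_hoeffding μ g hgm c hgosc t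
    rw [← hEg] at hh
    calc _ ≤ ∫ z, Real.exp (t * (g z - E)) * Real.exp (m * ((c / 2) ^ 2 * t ^ 2 / 2)) ∂μ := by
          apply integral_mono_of_nonneg
          · exact Filter.Eventually.of_forall fun z =>
              integral_nonneg fun S => (Real.exp_pos _).le
          · exact (aux_integrable μ _ (((hgm.sub_const E).const_mul t).exp) _
              (fun z => hexpb _ _ (hgB z) hEB)).mul_const _
          · exact Filter.Eventually.of_forall hstep
      _ = (∫ z, Real.exp (t * (g z - E)) ∂μ) * Real.exp (m * ((c / 2) ^ 2 * t ^ 2 / 2)) := by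
          rw [integral_mul_const]
      _ ≤ Real.exp ((c / 2) ^ 2 * t ^ 2 / 2) * Real.exp (m * ((c / 2) ^ 2 * t ^ 2 / 2)) :=
          mul_le_mul_of_nonneg_right hh (Real.exp_pos _).le
      _ = _ := by
          rw [← Real.exp_add]
          congr 1
          push_cast
          ring

lemma aux_tail {Z : Type*} [MeasurableSpace Z] (μ : Measure Z) [IsProbabilityMeasure μ]
    (c B : ℝ) (m : ℕ) (f : (Fin m → Z) → ℝ) (hf : Measurable f) (hB : ∀ S, |f S| ≤ B)
    (hc : ∀ S i z, f (Function.update S i z) - f S ≤ c) (M ε : ℝ) (hε : 0 < ε)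
    (hM : ∫ w, f w ∂(Measure.pi fun _ : Fin m => μ) ≤ M) :
    (Measure.pi fun _ : Fin m => μ) {S | M + ε ≤ f S} ≤
      ENNReal.ofReal (Real.exp (-ε ^ 2 / (2 * (m * (c / 2) ^ 2)))) := by
  set P := Measure.pi fun _ : Fin m => μ with hP
  set E := ∫ w, f w ∂P with hE
  have hsub : ProbabilityTheory.HasSubgaussianMGF (fun S => f S - E)
      (⟨m * (c / 2) ^ 2, by positivity⟩ : NNReal) P := by
    refine ⟨fun t => ?_, fun t => ?_⟩
    · refine aux_integrable P _ (((hf.sub_const E).const_mul t).exp)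
        (Real.exp (|t| * (B + |E|))) fun S => ?_
      rw [abs_of_pos (Real.exp_pos _), Real.exp_le_exp]
      calc t * (f S - E) ≤ |t| * |f S - E| := by rw [← abs_mul]; exact le_abs_self _
        _ ≤ _ := by
          gcongr
          have := abs_sub (f S) E
          linarith [hB S]
    · have := aux_mcdiarmid μ c B t m f hf hB hc
      unfold ProbabilityTheory.mgf
      refine this.trans (le_of_eq ?_)
      congr 1
      change _ = (m * (c / 2) ^ 2) * t ^ 2 / 2
      ring
  have h := hsub.measure_ge_le hε.le
  change P.real {S | ε ≤ f S - E} ≤ Real.exp (-ε ^ 2 / (2 * (m * (c / 2) ^ 2))) at h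
  calc P {S | M + ε ≤ f S} ≤ P {S | ε ≤ f S - E} := by
        apply measure_mono
        intro S hS
        simp only [Set.mem_setOf_eq] at hS ⊢
        linarith
    _ = ENNReal.ofReal (P.real {S | ε ≤ f S - E}) := by simp
    _ ≤ _ := ENNReal.ofReal_le_ofReal h

lemma aux_update {Z : Type*} [MeasurableSpace Z] (μ : Measure Z) [IsProbabilityMeasure μ]
    (m : ℕ) (j : Fin m) :
    MeasurePreserving (fun p : (Fin m → Z) × Z => Function.update p.1 j p.2)
      ((Measure.pi fun _ : Fin m => μ).prod μ) (Measure.pi fun _ : Fin m => μ) := by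
  have hme : Measurable (fun p : (Fin m → Z) × Z => Function.update p.1 j p.2) := by
    rw [measurable_pi_iff]
    intro i
    by_cases h : i = j
    · subst h; simpa using measurable_snd
    · simpa [h, Function.comp_def] using (measurable_pi_apply i).comp measurable_fst
  refine ⟨hme, ?_⟩
  symm
  apply Measure.pi_eq
  intro s hs
  rw [Measure.map_apply hme (MeasurableSet.univ_pi hs)]
  have : (fun p : (Fin m → Z) × Z => Function.update p.1 j p.2) ⁻¹' (Set.univ.pi s) =
      (Set.univ.pi (Function.update s j Set.univ)) ×ˢ (s j) := by
    ext ⟨S, z⟩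
    simp only [Set.mem_preimage, Set.mem_pi, Set.mem_univ, true_implies, Set.mem_prod]
    constructor
    · intro h
      refine ⟨fun i => ?_, by simpa using h j⟩
      by_cases hi : i = j
      · subst hi; simp
      · simpa [hi] using h i
    · rintro ⟨h1, h2⟩ i
      by_cases hi : i = j
      · subst hi; simpa using h2
      · simpa [hi] using h1 i
  rw [this, Measure.prod_prod, Measure.pi_pi, ← Finset.mul_prod_erase _ _ (Finset.mem_univ j),
    ← Finset.mul_prod_erase _ (fun i => μ (s i)) (Finset.mem_univ j)]
  have h3 : ∏ i ∈ Finset.univ.erase j, μ (Function.update s j Set.univ i) =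
      ∏ i ∈ Finset.univ.erase j, μ (s i) :=
    Finset.prod_congr rfl fun i hi => by simp [Finset.ne_of_mem_erase hi]
  rw [h3]
  simp [mul_comm]

/-- **Equation (5) in the proof of Theorem 3 (exponential tail bound).**
If `G` is a symmetric learning algorithm with function stability `Δbar` with
respect to removal of a sample, the point-wise cost `cτ` is `τ`-smooth, and
`0 ≤ ℓτ(G_S, z, k) ≤ γ` with `γ > 0`, then for `S` drawn i.i.d. of size `m`
from `D` and every `ε > 0`,
`P_S(R(G_S) − R_e(G_S) ≥ 2τΔbar + ε) ≤ exp(−2mε²/((4m−2)τΔbar + γ)²)`. -/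
theorem generalization_gap_tail_bound
    {X : Type*} [MeasurableSpace X] {n m : ℕ} (hn : 0 < n) (hm : 0 < m)
    (D : Measure (X × (Fin n → ℝ))) [IsProbabilityMeasure D]
    (G : (Fin m → X × (Fin n → ℝ)) → X → Fin n → ℝ)
    (Gminus : (Fin m → X × (Fin n → ℝ)) → Fin m → X → Fin n → ℝ)
    (cτ : ℝ → ℝ → ℝ) (τ Δbar : ℝ)
    (hGminus : ∀ (S : Fin m → X × (Fin n → ℝ)) (i : Fin m) (z : X × (Fin n → ℝ)),
      Gminus (Function.update S i z) i = Gminus S i)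
    (hstab : ∀ (S : Fin m → X × (Fin n → ℝ)) (i : Fin m) (x : X) (k : Fin n),
      |G S x k - Gminus S i x k| ≤ Δbar)
    (hsmooth : ∀ y₁ y₂ ystar : ℝ, |cτ y₁ ystar - cτ y₂ ystar| ≤ τ * |y₁ - y₂|)
    (hsym : ∀ (S : Fin m → X × (Fin n → ℝ)) (σ : Equiv.Perm (Fin m)), G (S ∘ σ) = G S)
    (γ : ℝ) (hγ : 0 < γ)
    (hbound : ∀ (S : Fin m → X × (Fin n → ℝ)) (z : X × (Fin n → ℝ)) (k : Fin n),
      0 ≤ cτ (G S z.1 k) (z.2 k) ∧ cτ (G S z.1 k) (z.2 k) ≤ γ)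
    (hIntG : ∀ S : Fin m → X × (Fin n → ℝ),
      Integrable (fun z => sampleLoss cτ (G S) z) D)
    (hIntGm : ∀ (S : Fin m → X × (Fin n → ℝ)) (i : Fin m),
      Integrable (fun z => sampleLoss cτ (Gminus S i) z) D)
    (hInt1 : Integrable
      (fun p : (Fin m → X × (Fin n → ℝ)) × (X × (Fin n → ℝ)) =>
        sampleLoss cτ (G p.1) p.2)
      ((Measure.pi fun _ : Fin m => D).prod D))
    (hInt2 : ∀ i : Fin m, Integrable
      (fun p : (Fin m → X × (Fin n → ℝ)) × (X × (Fin n → ℝ)) =>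
        sampleLoss cτ (G (Function.update p.1 i p.2)) p.2)
      ((Measure.pi fun _ : Fin m => D).prod D))
    (hInt3 : ∀ j : Fin m, Integrable
      (fun S : Fin m → X × (Fin n → ℝ) => sampleLoss cτ (G S) (S j))
      (Measure.pi fun _ : Fin m => D))
    (hIntR : Integrable
      (fun S : Fin m → X × (Fin n → ℝ) => genRisk D cτ (G S))
      (Measure.pi fun _ : Fin m => D))
    (hmeas : Measurable
      (fun S : Fin m → X × (Fin n → ℝ) => genRisk D cτ (G S) - empRisk cτ (G S) S))
 :
    ∀ ε : ℝ, 0 < ε →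
      (Measure.pi fun _ : Fin m => D)
          {S | 2 * τ * Δbar + ε ≤ genRisk D cτ (G S) - empRisk cτ (G S) S}
        ≤ ENNReal.ofReal
            (Real.exp (-(2 * (m : ℝ) * ε ^ 2) / ((4 * (m : ℝ) - 2) * τ * Δbar + γ) ^ 2)) := by
  intro ε hε
  have hm' : (0 : ℝ) < m := by exact_mod_cast hm
  have hm1 : (1 : ℝ) ≤ m := by exact_mod_cast hm
  have hn' : (0 : ℝ) < n := by exact_mod_cast hn
  have hne : Nonempty (X × (Fin n → ℝ)) := by
    by_contra h
    rw [not_nonempty_iff] at h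
    have := measure_univ (μ := D)
    rw [Set.eq_empty_of_isEmpty (Set.univ : Set (X × (Fin n → ℝ)))] at this
    simp at this
  obtain ⟨z0⟩ := hne
  have hτ : 0 ≤ τ := by
    have := hsmooth 1 0 0
    have h2 := abs_nonneg (cτ 1 0 - cτ 0 0)
    simp at this
    linarith
  have hΔ : 0 ≤ Δbar :=
    (abs_nonneg _).trans (hstab (fun _ => z0) ⟨0, hm⟩ z0.1 ⟨0, hn⟩)
  have hτΔ : 0 ≤ τ * Δbar := mul_nonneg hτ hΔ
  -- pointwise stability under replacement
  have hrep : ∀ S i z x k ys,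
      |cτ (G (Function.update S i z) x k) ys - cτ (G S x k) ys| ≤ 2 * (τ * Δbar) := by
    intro S i z x k ys
    refine (hsmooth _ _ _).trans ?_
    have h1 := hstab (Function.update S i z) i x k
    rw [hGminus] at h1
    have h2 := hstab S i x k
    have h3 := abs_sub_le (G (Function.update S i z) x k) (Gminus S i x k) (G S x k)
    rw [abs_sub_comm (Gminus S i x k)] at h3
    have : |G (Function.update S i z) x k - G S x k| ≤ 2 * Δbar := by linarith
    nlinarith
  have hL : ∀ S i z w, |sampleLoss cτ (G (Function.update S i z)) w - sampleLoss cτ (G S) w|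
      ≤ n * (2 * (τ * Δbar)) := by
    intro S i z w
    unfold sampleLoss
    rw [← Finset.sum_sub_distrib]
    refine (Finset.abs_sum_le_sum_abs _ _).trans ?_
    refine (Finset.sum_le_sum fun k _ => hrep S i z w.1 k (w.2 k)).trans ?_
    simp
  have hL0 : ∀ S w, 0 ≤ sampleLoss cτ (G S) w := fun S w =>
    Finset.sum_nonneg fun k _ => (hbound S w k).1
  have hLγ : ∀ S w, sampleLoss cτ (G S) w ≤ n * γ := fun S w => by
    refine (Finset.sum_le_sum fun k _ => (hbound S w k).2).trans ?_
    simp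
  have hgen : ∀ S, genRisk D cτ (G S) = (1 / (n : ℝ)) * ∫ z, sampleLoss cτ (G S) z ∂D := by
    intro S
    unfold genRisk
    rw [integral_const_mul]
  have hR0 : ∀ S, 0 ≤ genRisk D cτ (G S) := fun S => by
    rw [hgen]
    exact mul_nonneg (by positivity) (integral_nonneg fun z => hL0 S z)
  have hRγ : ∀ S, genRisk D cτ (G S) ≤ γ := fun S => by
    rw [hgen]
    have : ∫ z, sampleLoss cτ (G S) z ∂D ≤ n * γ := by
      have := integral_mono (hIntG S) (integrable_const (n * γ)) (fun z => hLγ S z)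
      simpa using this
    calc _ ≤ (1 / (n : ℝ)) * (n * γ) := by gcongr
      _ = γ := by field_simp
  have hE0 : ∀ S, 0 ≤ empRisk cτ (G S) S := fun S => by
    unfold empRisk
    exact mul_nonneg (by positivity) (Finset.sum_nonneg fun i _ => hL0 S _)
  have hEγ : ∀ S, empRisk cτ (G S) S ≤ γ := fun S => by
    unfold empRisk
    have : ∑ i, sampleLoss cτ (G S) (S i) ≤ m * (n * γ) := by
      refine (Finset.sum_le_sum fun i _ => hLγ S (S i)).trans ?_
      simp
    calc _ ≤ (1 / ((m : ℝ) * n)) * (m * (n * γ)) := by gcongr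
      _ = γ := by field_simp
  have hB : ∀ S, |genRisk D cτ (G S) - empRisk cτ (G S) S| ≤ γ := fun S => by
    rw [abs_le]
    constructor <;> linarith [hR0 S, hRγ S, hE0 S, hEγ S]
  have hosc : ∀ S i z,
      (genRisk D cτ (G (Function.update S i z))
        - empRisk cτ (G (Function.update S i z)) (Function.update S i z))
      - (genRisk D cτ (G S) - empRisk cτ (G S) S)
      ≤ ((4 * (m : ℝ) - 2) * τ * Δbar + γ) / m := by
    intro S i z
    have h1 : genRisk D cτ (G (Function.update S i z)) - genRisk D cτ (G S)
        ≤ 2 * (τ * Δbar) := by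
      rw [hgen, hgen, ← mul_sub, ← integral_sub (hIntG _) (hIntG _)]
      have : ∫ w, (sampleLoss cτ (G (Function.update S i z)) w - sampleLoss cτ (G S) w) ∂D
          ≤ n * (2 * (τ * Δbar)) := by
        have := integral_mono ((hIntG (Function.update S i z)).sub (hIntG S))
          (integrable_const (n * (2 * (τ * Δbar)))) (fun w => (le_abs_self _).trans (hL S i z w))
        simpa using this
      calc _ ≤ (1 / (n : ℝ)) * (n * (2 * (τ * Δbar))) := by gcongr
        _ = _ := by field_simp
    have h2 : empRisk cτ (G S) S
        - empRisk cτ (G (Function.update S i z)) (Function.update S i z)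
        ≤ (1 / ((m : ℝ) * n)) * (n * γ + (m - 1) * (n * (2 * (τ * Δbar)))) := by
      unfold empRisk
      rw [← mul_sub, ← Finset.sum_sub_distrib]
      refine mul_le_mul_of_nonneg_left ?_ (by positivity)
      rw [← Finset.add_sum_erase _ _ (Finset.mem_univ i)]
      have h0 := hL0 (Function.update S i z) (Function.update S i z i)
      refine add_le_add (by linarith [hLγ S (S i)]) ?_
      have : ∀ j ∈ Finset.univ.erase i, sampleLoss cτ (G S) (S j)
          - sampleLoss cτ (G (Function.update S i z)) (Function.update S i z j)
          ≤ n * (2 * (τ * Δbar)) := by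
        intro j hj
        rw [Function.update_of_ne (Finset.ne_of_mem_erase hj)]
        have := hL S i z (S j)
        rw [abs_sub_comm] at this
        exact (le_abs_self _).trans this
      refine (Finset.sum_le_card_nsmul _ _ _ this).trans (le_of_eq ?_)
      rw [Finset.card_erase_of_mem (Finset.mem_univ i), nsmul_eq_mul]
      simp [Nat.cast_sub hm]
    have h3 : ((4 * (m : ℝ) - 2) * τ * Δbar + γ) / m = 2 * (τ * Δbar) +
        (1 / ((m : ℝ) * n)) * (n * γ + (m - 1) * (n * (2 * (τ * Δbar)))) := by
      field_simp
      ring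
    linarith
  have hmean : ∫ S, (genRisk D cτ (G S) - empRisk cτ (G S) S) ∂(Measure.pi fun _ : Fin m => D)
      ≤ 2 * τ * Δbar := by
    set P := Measure.pi fun _ : Fin m => D with hP
    have hIntE : Integrable (fun S => empRisk cτ (G S) S) P := by
      unfold empRisk
      exact (integrable_finset_sum _ fun j _ => hInt3 j).const_mul _
    rw [integral_sub hIntR hIntE]
    have h1 : ∫ S, genRisk D cτ (G S) ∂P
        = (1 / (n : ℝ)) * ∫ p, sampleLoss cτ (G p.1) p.2 ∂(P.prod D) := by
      rw [integral_prod _ hInt1, ← integral_const_mul]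
      simp_rw [hgen]
    have h2 : ∀ j, ∫ S, sampleLoss cτ (G S) (S j) ∂P
        = ∫ p, sampleLoss cτ (G (Function.update p.1 j p.2)) p.2 ∂(P.prod D) := by
      intro j
      have hmp := aux_update D m j
      have h := integral_map (μ := P.prod D) hmp.measurable.aemeasurable
        (f := fun S => sampleLoss cτ (G S) (S j))
        (by rw [hmp.map_eq]; exact (hInt3 j).aestronglyMeasurable)
      rw [hmp.map_eq] at h
      simpa using h
    have h3 : ∀ j, ∫ p, sampleLoss cτ (G p.1) p.2 ∂(P.prod D) - n * (2 * (τ * Δbar))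
        ≤ ∫ S, sampleLoss cτ (G S) (S j) ∂P := by
      intro j
      rw [h2 j, sub_le_comm, ← integral_sub hInt1 (hInt2 j)]
      have := integral_mono (hInt1.sub (hInt2 j)) (integrable_const (n * (2 * (τ * Δbar))))
        (fun p => by
          have := hL p.1 j p.2 p.2
          rw [abs_sub_comm] at this
          exact (le_abs_self _).trans this)
      simpa using this
    have h4 : ∫ S, empRisk cτ (G S) S ∂P
        = (1 / ((m : ℝ) * n)) * ∑ j, ∫ S, sampleLoss cτ (G S) (S j) ∂P := by
      unfold empRisk
      rw [integral_const_mul, integral_finset_sum _ fun j _ => hInt3 j]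
    set I := ∫ p, sampleLoss cτ (G p.1) p.2 ∂(P.prod D) with hI
    have h5 : (m : ℝ) * (I - n * (2 * (τ * Δbar)))
        ≤ ∑ j, ∫ S, sampleLoss cτ (G S) (S j) ∂P := by
      refine le_trans (le_of_eq ?_) (Finset.sum_le_sum fun j _ => h3 j)
      simp
      ring
    have h6 : (1 / ((m : ℝ) * n)) * ((m : ℝ) * (I - n * (2 * (τ * Δbar))))
        ≤ (1 / ((m : ℝ) * n)) * ∑ j, ∫ S, sampleLoss cτ (G S) (S j) ∂P :=
      mul_le_mul_of_nonneg_left h5 (by positivity)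
    have h7 : (1 / ((m : ℝ) * n)) * ((m : ℝ) * (I - n * (2 * (τ * Δbar))))
        = (1 / (n : ℝ)) * I - 2 * τ * Δbar := by
      field_simp
    rw [h1, h4]
    linarith
  refine (aux_tail D _ γ m _ hmeas hB hosc (2 * τ * Δbar) ε hε hmean).trans (le_of_eq ?_)
  have hpos : 0 < (4 * (m : ℝ) - 2) * τ * Δbar + γ := by
    have : 0 ≤ (4 * (m : ℝ) - 2) * (τ * Δbar) := mul_nonneg (by linarith) hτΔ
    nlinarith
  congr 2
  field_simp
end

section
/- (Theorem 3: Generalization vs. stability.) Let G be a symmetric real-valued structured classification learning algorithm with a point-wise loss ℓ_τ based on a τ-smooth cost and satisfying 0 ≤ ℓ_τ(G_S, z, k) ≤ γ for all k, and suppose G has function stability Δ̄ with respect to removal of a sample. Then for any δ ∈ (0,1), with probability at least 1 − δ over the i.i.d. draw of the training set S of size m from D, the generalization risk is bounded by: R(G_S) ≤ R_e(G_S) + 2τΔ̄ + ((4m−2)τΔ̄ + γ)·√(ln(1/δ)/(2m)). -/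
open MeasureTheory
open scoped BigOperators

lemma bd_osc {Z : Type*} {m : ℕ} (f : (Fin m → Z) → ℝ) (c : ℝ)
    (hf : ∀ S i z, |f S - f (Function.update S i z)| ≤ c) (S T : Fin m → Z) :
    |f S - f T| ≤ m * c := by
  classical
  have key : ∀ s : Finset (Fin m), |f S - f (s.piecewise T S)| ≤ s.card * c := by
    intro s
    induction s using Finset.induction_on with
    | empty => simp
    | insert a s ha ih =>
      rw [Finset.piecewise_insert, Finset.card_insert_of_notMem ha]
      have := hf (s.piecewise T S) a (T a)
      have h2 := abs_sub_le (f S) (f (s.piecewise T S))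
        (f (Function.update (s.piecewise T S) a (T a)))
      push_cast
      linarith
  simpa using key Finset.univ

lemma bd_integrable {Ω : Type*} [MeasurableSpace Ω] (μ : Measure Ω) [IsProbabilityMeasure μ]
    (f : Ω → ℝ) (hm : Measurable f) (C : ℝ) (h : ∀ a b, |f a - f b| ≤ C) : Integrable f μ := by
  obtain ⟨b⟩ := nonempty_of_isProbabilityMeasure μ
  refine Integrable.of_bound hm.aestronglyMeasurable (C + |f b|) (Filter.Eventually.of_forall fun a => ?_)
  have := abs_sub_abs_le_abs_sub (f a) (f b)
  have := h a b
  rw [Real.norm_eq_abs]; linarith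

lemma bd_integrable_exp {Ω : Type*} [MeasurableSpace Ω] (μ : Measure Ω) [IsProbabilityMeasure μ]
    (f : Ω → ℝ) (hm : Measurable f) (C : ℝ) (h : ∀ a b, |f a - f b| ≤ C) (t K : ℝ) :
    Integrable (fun a => Real.exp (t * (f a - K))) μ := by
  obtain ⟨b⟩ := nonempty_of_isProbabilityMeasure μ
  refine Integrable.of_bound (by fun_prop) (Real.exp (|t| * (C + |f b - K|))) (Filter.Eventually.of_forall fun a => ?_)
  rw [Real.norm_eq_abs, Real.abs_exp]
  apply Real.exp_le_exp.2
  calc t * (f a - K) ≤ |t| * |f a - K| := by rw [← abs_mul]; exact le_abs_self _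
    _ ≤ _ := by
      gcongr
      have := abs_sub_le (f a) (f b) K
      have := h a b
      linarith

lemma hoeffding_osc {Ω : Type*} [MeasurableSpace Ω] (μ : Measure Ω) [IsProbabilityMeasure μ]
    (f : Ω → ℝ) (hm : Measurable f) (c : ℝ) (h : ∀ a b, |f a - f b| ≤ c) (t : ℝ) :
    ∫ a, Real.exp (t * (f a - ∫ x, f x ∂μ)) ∂μ ≤ Real.exp (t ^ 2 * c ^ 2 / 8) := by
  obtain ⟨b⟩ := nonempty_of_isProbabilityMeasure μ
  have hne : Nonempty Ω := ⟨b⟩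
  have hb : BddBelow (Set.range f) := ⟨f b - c, by
    rintro _ ⟨a, rfl⟩
    have := (abs_le.1 (h a b)).1; linarith⟩
  have hI : ∀ a, f a ∈ Set.Icc (⨅ x, f x) ((⨅ x, f x) + c) := fun a => by
    refine ⟨ciInf_le hb a, ?_⟩
    have : f a - c ≤ ⨅ x, f x := le_ciInf fun x => by
      have := (abs_le.1 (h a x)).2; linarith
    linarith
  have := (ProbabilityTheory.hasSubgaussianMGF_of_mem_Icc (μ := μ) hm.aemeasurable (Filter.Eventually.of_forall hI)).mgf_le t
  rw [ProbabilityTheory.mgf] at this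
  refine this.trans (le_of_eq ?_)
  congr 1
  simp [div_pow, sq_abs]
  ring

lemma mcdiarmid_mgf {Z : Type*} [MeasurableSpace Z] (D : Measure Z) [IsProbabilityMeasure D]
    (c t : ℝ) (m : ℕ) : ∀ (f : (Fin m → Z) → ℝ), Measurable f →
    (∀ S i z, |f S - f (Function.update S i z)| ≤ c) →
    ∫ S, Real.exp (t * (f S - ∫ x, f x ∂(Measure.pi fun _ : Fin m => D)))
      ∂(Measure.pi fun _ : Fin m => D) ≤ Real.exp (t ^ 2 * (m * c ^ 2) / 8) := by
  induction m with
  | zero =>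
    intro f hf hc
    have : ∀ S : Fin 0 → Z, f S = f default := fun S => congrArg f (Subsingleton.elim _ _)
    simp [this]
  | succ m ih =>
    intro f hf hc
    have hosc := bd_osc f c hc
    have mp := (measurePreserving_piFinSuccAbove (fun _ : Fin (m+1) => D) 0).symm
    set P := Measure.pi fun _ : Fin m => D with hP
    have mp' : MeasurePreserving (fun p : Z × (Fin m → Z) => (Fin.cons p.1 p.2 : Fin (m+1) → Z))
        (D.prod P) (Measure.pi fun _ : Fin (m+1) => D) := by
      convert mp using 1
      ext p j
      simp [MeasurableEquiv.piFinSuccAbove_symm_apply, Fin.insertNthEquiv]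
    have emb : MeasurableEmbedding (fun p : Z × (Fin m → Z) => (Fin.cons p.1 p.2 : Fin (m+1) → Z)) := by
      convert (MeasurableEquiv.piFinSuccAbove (fun _ : Fin (m+1) => Z) 0).symm.measurableEmbedding using 1
      ext p j
      simp [MeasurableEquiv.piFinSuccAbove_symm_apply, Fin.insertNthEquiv]
    let g : Z × (Fin m → Z) → ℝ := fun p => f (Fin.cons p.1 p.2)
    have hg : Measurable g := hf.comp mp'.measurable
    have hgosc : ∀ p q, |g p - g q| ≤ ((m+1 : ℕ) : ℝ) * c := fun p q => hosc _ _
    have hgz : ∀ z, Measurable fun S => g (z, S) := fun z => hg.comp measurable_prodMk_left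
    have hgzi : ∀ z, Integrable (fun S => g (z, S)) P := fun z =>
      bd_integrable P _ (hgz z) _ (fun a b => hgosc _ _)
    let h : Z → ℝ := fun z => ∫ S, g (z, S) ∂P
    have hh : Measurable h := (hg.stronglyMeasurable.integral_prod_right').measurable
    have hhosc : ∀ a b, |h a - h b| ≤ c := by
      intro a b
      have e : h a - h b = ∫ S, (g (a, S) - g (b, S)) ∂P := (integral_sub (hgzi a) (hgzi b)).symm
      rw [e]
      have := norm_integral_le_of_norm_le_const (μ := P) (f := fun S => g (a, S) - g (b, S)) (C := c)
        (Filter.Eventually.of_forall fun S => by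
          have := hc (Fin.cons a S) 0 b
          rw [Fin.update_cons_zero] at this
          exact this)
      simpa using this
    have hE : ∫ x, f x ∂(Measure.pi fun _ : Fin (m+1) => D) = ∫ z, h z ∂D := by
      rw [← mp'.integral_comp emb]
      exact integral_prod _ (bd_integrable _ g hg _ hgosc)
    rw [hE, ← mp'.integral_comp emb]
    set K := ∫ z, h z ∂D with hK
    have hi1 := bd_integrable_exp (D.prod P) g hg _ hgosc t K
    have e1 : ∫ p : Z × (Fin m → Z), Real.exp (t * (f (Fin.cons p.1 p.2) - K)) ∂(D.prod P)
        = ∫ z, ∫ S, Real.exp (t * (g (z, S) - K)) ∂P ∂D := integral_prod _ hi1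
    rw [e1]
    have hz : ∀ z, ∫ S, Real.exp (t * (g (z, S) - K)) ∂P ≤
        Real.exp (t ^ 2 * (m * c ^ 2) / 8) * Real.exp (t * (h z - K)) := by
      intro z
      have e2 : ∀ S, Real.exp (t * (g (z, S) - K)) =
          Real.exp (t * (g (z, S) - h z)) * Real.exp (t * (h z - K)) := by
        intro S; rw [← Real.exp_add]; congr 1; ring
      simp_rw [e2]
      rw [integral_mul_const]
      gcongr
      apply ih (fun S => g (z, S)) (hgz z)
      intro S i w
      have := hc (Fin.cons z S) i.succ w
      rw [← Fin.cons_update] at this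
      exact this
    calc _ ≤ ∫ z, Real.exp (t ^ 2 * (m * c ^ 2) / 8) * Real.exp (t * (h z - K)) ∂D :=
          integral_mono hi1.integral_prod_left ((bd_integrable_exp D h hh c hhosc t K).const_mul _) hz
      _ ≤ Real.exp (t ^ 2 * (m * c ^ 2) / 8) * Real.exp (t ^ 2 * c ^ 2 / 8) := by
          rw [integral_const_mul]
          gcongr
          exact hoeffding_osc D h hh c hhosc t
      _ = _ := by
          rw [← Real.exp_add]; congr 1; push_cast; ring

lemma mcdiarmid_tail {Z : Type*} [MeasurableSpace Z] (D : Measure Z) [IsProbabilityMeasure D]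
    (c : ℝ) (m : ℕ) (hm : 0 < m) (f : (Fin m → Z) → ℝ) (hf : Measurable f)
    (hc : ∀ S i z, |f S - f (Function.update S i z)| ≤ c) (δ : ℝ) (hδ : δ ∈ Set.Ioo (0:ℝ) 1) (B : ℝ)
    (hB : ∫ x, f x ∂(Measure.pi fun _ : Fin m => D) ≤ B) :
    ENNReal.ofReal (1 - δ) ≤ (Measure.pi fun _ : Fin m => D)
      {S | f S ≤ B + (m * c) * Real.sqrt (Real.log δ⁻¹ / (2 * m))} := by
  set P := Measure.pi fun _ : Fin m => D with hP
  obtain ⟨S0⟩ := nonempty_of_isProbabilityMeasure P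
  have hosc := bd_osc f c hc
  have hc0 : 0 ≤ c := (abs_nonneg _).trans (hc S0 ⟨0, hm⟩ (S0 ⟨0, hm⟩))
  have hl : 0 < Real.log δ⁻¹ := Real.log_pos (by rw [one_lt_inv₀ hδ.1]; exact hδ.2)
  have hm' : (0:ℝ) < m := by exact_mod_cast hm
  set E := ∫ x, f x ∂P with hE
  rcases hc0.eq_or_lt with h0 | hpos
  · have hcst : ∀ S, f S = E := by
      intro S
      have : ∀ T, f T = f S := fun T => by
        have := hosc T S
        rw [← h0, mul_zero] at this
        exact sub_eq_zero.1 (abs_nonpos_iff.1 this)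
      rw [hE]; simp [this]
    have : {S | f S ≤ B + (m * c) * Real.sqrt (Real.log δ⁻¹ / (2 * m))} = Set.univ := by
      ext S; simp [hcst S, ← h0, hB]
    rw [this, measure_univ]
    simpa using hδ.1.le
  · set ε := (m * c) * Real.sqrt (Real.log δ⁻¹ / (2 * m)) with hε
    have hε0 : 0 ≤ ε := by positivity
    have hsg : ProbabilityTheory.HasSubgaussianMGF (fun S => f S - E) ⟨m * c ^ 2 / 4, by positivity⟩ P :=
      ⟨fun t => bd_integrable_exp P f hf _ hosc t E, fun t => by
        refine (mcdiarmid_mgf D c t m f hf hc).trans (le_of_eq ?_)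
        congr 1
        change _ = m * c ^ 2 / 4 * t ^ 2 / 2
        ring⟩
    have hb := hsg.measure_ge_le hε0
    have hv : Real.exp (-ε ^ 2 / (2 * (m * c ^ 2 / 4))) = δ := by
      have : ε ^ 2 = (m * c) ^ 2 * (Real.log δ⁻¹ / (2 * m)) := by
        rw [hε, mul_pow, Real.sq_sqrt (by positivity)]
      rw [this, show -((m * c) ^ 2 * (Real.log δ⁻¹ / (2 * m))) / (2 * (m * c ^ 2 / 4)) = - Real.log δ⁻¹ by
        field_simp; ring, Real.log_inv, neg_neg, Real.exp_log hδ.1]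
    have hb' : P.real {S | ε ≤ f S - E} ≤ δ := hb.trans (le_of_eq hv)
    have hms : MeasurableSet {S | ε ≤ f S - E} := measurableSet_le measurable_const (by fun_prop)
    calc ENNReal.ofReal (1 - δ) ≤ ENNReal.ofReal (P.real {S | ε ≤ f S - E}ᶜ) := by
          apply ENNReal.ofReal_le_ofReal
          rw [probReal_compl_eq_one_sub hms]; linarith
      _ = P {S | ε ≤ f S - E}ᶜ := by simp
      _ ≤ _ := by
          apply measure_mono
          intro S hS
          simp only [Set.mem_compl_iff, Set.mem_ofPred_eq, not_le] at hS ⊢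
          linarith

lemma update_mp {Z : Type*} [MeasurableSpace Z] (D : Measure Z) [IsProbabilityMeasure D]
    (m : ℕ) (i : Fin m) : MeasurePreserving (fun p : (Fin m → Z) × Z => Function.update p.1 i p.2)
      ((Measure.pi fun _ : Fin m => D).prod D) (Measure.pi fun _ : Fin m => D) := by
  refine ⟨measurable_update', (Measure.pi_eq fun s hs => ?_).symm⟩
  rw [Measure.map_apply measurable_update' (MeasurableSet.univ_pi hs)]
  have : (fun p : (Fin m → Z) × Z => Function.update p.1 i p.2) ⁻¹' (Set.univ.pi s)
      = (Set.univ.pi (Function.update s i Set.univ)) ×ˢ s i := by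
    ext ⟨S, z⟩
    simp only [Set.mem_preimage, Set.mem_pi, Set.mem_univ, true_imp_iff, Set.mem_prod]
    constructor
    · intro h
      refine ⟨fun j => ?_, by simpa using h i⟩
      by_cases hj : j = i
      · subst hj; simp
      · simpa [hj] using h j
    · rintro ⟨h, h'⟩ j
      by_cases hj : j = i
      · subst hj; simpa using h'
      · simpa [hj] using h j
  rw [this, Measure.prod_prod, Measure.pi_pi, ← Finset.mul_prod_erase _ _ (Finset.mem_univ i),
    ← Finset.mul_prod_erase Finset.univ (fun j => D (s j)) (Finset.mem_univ i)]
  rw [Finset.prod_congr rfl (g := fun j => D (s j))]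
  · simp [mul_comm]
  · intro j hj
    simp [Finset.ne_of_mem_erase hj]

/-- **Theorem 3 (Generalization vs. stability).**
Let `G` be a symmetric learning algorithm with point-wise loss `ℓτ` based on a
`τ`-smooth cost, satisfying `0 ≤ ℓτ(G_S, z, k) ≤ γ`, and having function
stability `Δbar` with respect to removal of a sample.  Then for any
`δ ∈ (0,1)`, with probability at least `1 − δ` over the i.i.d. draw of the
training set `S` of size `m` from `D`,
`R(G_S) ≤ R_e(G_S) + 2τΔbar + ((4m−2)τΔbar + γ)√(ln(1/δ)/(2m))`. -/
theorem generalization_vs_stability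
    {X : Type*} [MeasurableSpace X] {n m : ℕ} (hn : 0 < n) (hm : 0 < m)
    (D : Measure (X × (Fin n → ℝ))) [IsProbabilityMeasure D]
    (G : (Fin m → X × (Fin n → ℝ)) → X → Fin n → ℝ)
    (Gminus : (Fin m → X × (Fin n → ℝ)) → Fin m → X → Fin n → ℝ)
    (cτ : ℝ → ℝ → ℝ) (τ Δbar : ℝ)
    (hGminus : ∀ (S : Fin m → X × (Fin n → ℝ)) (i : Fin m) (z : X × (Fin n → ℝ)),
      Gminus (Function.update S i z) i = Gminus S i)
    (hstab : ∀ (S : Fin m → X × (Fin n → ℝ)) (i : Fin m) (x : X) (k : Fin n),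
      |G S x k - Gminus S i x k| ≤ Δbar)
    (hsmooth : ∀ y₁ y₂ ystar : ℝ, |cτ y₁ ystar - cτ y₂ ystar| ≤ τ * |y₁ - y₂|)
    (hsym : ∀ (S : Fin m → X × (Fin n → ℝ)) (σ : Equiv.Perm (Fin m)), G (S ∘ σ) = G S)
    (γ : ℝ)
    (hbound : ∀ (S : Fin m → X × (Fin n → ℝ)) (z : X × (Fin n → ℝ)) (k : Fin n),
      0 ≤ cτ (G S z.1 k) (z.2 k) ∧ cτ (G S z.1 k) (z.2 k) ≤ γ)
    (hIntG : ∀ S : Fin m → X × (Fin n → ℝ),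
      Integrable (fun z => sampleLoss cτ (G S) z) D)
    (hIntGm : ∀ (S : Fin m → X × (Fin n → ℝ)) (i : Fin m),
      Integrable (fun z => sampleLoss cτ (Gminus S i) z) D)
    (hInt1 : Integrable
      (fun p : (Fin m → X × (Fin n → ℝ)) × (X × (Fin n → ℝ)) =>
        sampleLoss cτ (G p.1) p.2)
      ((Measure.pi fun _ : Fin m => D).prod D))
    (hInt2 : ∀ i : Fin m, Integrable
      (fun p : (Fin m → X × (Fin n → ℝ)) × (X × (Fin n → ℝ)) =>
        sampleLoss cτ (G (Function.update p.1 i p.2)) p.2)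
      ((Measure.pi fun _ : Fin m => D).prod D))
    (hInt3 : ∀ j : Fin m, Integrable
      (fun S : Fin m → X × (Fin n → ℝ) => sampleLoss cτ (G S) (S j))
      (Measure.pi fun _ : Fin m => D))
    (hIntR : Integrable
      (fun S : Fin m → X × (Fin n → ℝ) => genRisk D cτ (G S))
      (Measure.pi fun _ : Fin m => D))
    (hmeas : Measurable
      (fun S : Fin m → X × (Fin n → ℝ) => genRisk D cτ (G S) - empRisk cτ (G S) S))
 :
    ∀ δ : ℝ, δ ∈ Set.Ioo (0 : ℝ) 1 →
      ENNReal.ofReal (1 - δ) ≤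
        (Measure.pi fun _ : Fin m => D)
          {S | genRisk D cτ (G S)
            ≤ empRisk cτ (G S) S + 2 * τ * Δbar
              + ((4 * (m : ℝ) - 2) * τ * Δbar + γ)
                * Real.sqrt (Real.log δ⁻¹ / (2 * (m : ℝ)))} := by
  intro δ hδ
  have hn' : (0:ℝ) < n := by exact_mod_cast hn
  have hm' : (0:ℝ) < m := by exact_mod_cast hm
  have hτ : 0 ≤ τ := by simpa using (abs_nonneg _).trans (hsmooth 1 0 0)
  set P := Measure.pi fun _ : Fin m => D with hP
  have hpt : ∀ S i w z, |sampleLoss cτ (G S) z - sampleLoss cτ (G (Function.update S i w)) z|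
      ≤ n * (2 * τ * Δbar) := by
    intro S i w z
    unfold sampleLoss
    rw [← Finset.sum_sub_distrib]
    refine (Finset.abs_sum_le_sum_abs _ _).trans ?_
    refine (Finset.sum_le_card_nsmul _ _ (2 * τ * Δbar) fun k _ => ?_).trans (by simp)
    refine (hsmooth _ _ _).trans ?_
    have h1 := hstab S i z.1 k
    have h2 := hstab (Function.update S i w) i z.1 k
    rw [hGminus] at h2
    have h3 : |G S z.1 k - G (Function.update S i w) z.1 k| ≤ 2 * Δbar := by
      rw [abs_le] at *
      constructor <;> linarith [h1.1, h1.2, h2.1, h2.2]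
    calc τ * _ ≤ τ * (2 * Δbar) := mul_le_mul_of_nonneg_left h3 hτ
      _ = _ := by ring
  have hL0 : ∀ S z, 0 ≤ sampleLoss cτ (G S) z := fun S z =>
    Finset.sum_nonneg fun k _ => (hbound S z k).1
  have hLγ : ∀ S z, sampleLoss cτ (G S) z ≤ n * γ := fun S z =>
    (Finset.sum_le_card_nsmul _ _ γ fun k _ => (hbound S z k).2).trans (by simp)
  have hR : ∀ S i w, |genRisk D cτ (G S) - genRisk D cτ (G (Function.update S i w))|
      ≤ 2 * τ * Δbar := by
    intro S i w
    unfold genRisk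
    rw [← integral_sub ((hIntG _).const_mul _) ((hIntG _).const_mul _)]
    have := norm_integral_le_of_norm_le_const (μ := D)
      (f := fun z => 1 / (n:ℝ) * sampleLoss cτ (G S) z
        - 1 / (n:ℝ) * sampleLoss cτ (G (Function.update S i w)) z) (C := 2 * τ * Δbar)
      (Filter.Eventually.of_forall fun z => by
        rw [← mul_sub, Real.norm_eq_abs, abs_mul, abs_of_pos (by positivity)]
        rw [one_div, inv_mul_le_iff₀ hn']
        exact hpt S i w z)
    simpa using this
  have hRe : ∀ S i w, |empRisk cτ (G S) S
      - empRisk cτ (G (Function.update S i w)) (Function.update S i w)|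
      ≤ ((m - 1) * (2 * τ * Δbar) + γ) / m := by
    intro S i w
    unfold empRisk
    rw [← mul_sub, ← Finset.sum_sub_distrib, abs_mul, abs_of_pos (by positivity),
      ← Finset.add_sum_erase _ _ (Finset.mem_univ i)]
    have h1 : |sampleLoss cτ (G S) (S i) - sampleLoss cτ (G (Function.update S i w))
        (Function.update S i w i)| ≤ n * γ := by
      rw [abs_le]
      constructor <;> linarith [hL0 S (S i), hLγ S (S i), hL0 (Function.update S i w)
        (Function.update S i w i), hLγ (Function.update S i w) (Function.update S i w i)]
    have h2 : |∑ j ∈ Finset.univ.erase i, (sampleLoss cτ (G S) (S j)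
        - sampleLoss cτ (G (Function.update S i w)) (Function.update S i w j))|
        ≤ (m - 1) * (n * (2 * τ * Δbar)) := by
      refine (Finset.abs_sum_le_sum_abs _ _).trans ?_
      refine (Finset.sum_le_card_nsmul _ _ (n * (2 * τ * Δbar)) fun j hj => ?_).trans (le_of_eq ?_)
      · rw [Function.update_of_ne (Finset.ne_of_mem_erase hj)]
        exact hpt S i w (S j)
      · rw [Finset.card_erase_of_mem (Finset.mem_univ i), nsmul_eq_mul, Finset.card_univ,
          Fintype.card_fin, Nat.cast_sub hm, Nat.cast_one]
    calc _ ≤ 1 / ((m:ℝ) * n) * (n * γ + (m - 1) * (n * (2 * τ * Δbar))) := by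
          gcongr
          exact (abs_add_le _ _).trans (add_le_add h1 h2)
      _ = _ := by field_simp; ring
  have hdiff : ∀ S i w, |(genRisk D cτ (G S) - empRisk cτ (G S) S)
      - (genRisk D cτ (G (Function.update S i w))
        - empRisk cτ (G (Function.update S i w)) (Function.update S i w))|
      ≤ ((4 * (m:ℝ) - 2) * τ * Δbar + γ) / m := by
    intro S i w
    have h1 := hR S i w
    have h2 := hRe S i w
    have e : ((4 * (m:ℝ) - 2) * τ * Δbar + γ) / m
        = 2 * τ * Δbar + ((m - 1) * (2 * τ * Δbar) + γ) / m := by field_simp; ring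
    rw [e]
    rw [abs_le] at *
    constructor <;> linarith [h1.1, h1.2, h2.1, h2.2]
  have hexp : ∫ S, (genRisk D cτ (G S) - empRisk cτ (G S) S) ∂P ≤ 2 * τ * Δbar := by
    have hie : Integrable (fun S => empRisk cτ (G S) S) P :=
      (integrable_finsetSum _ fun i _ => hInt3 i).const_mul _
    rw [integral_sub hIntR hie]
    have e1 : ∫ S, genRisk D cτ (G S) ∂P
        = 1 / (n:ℝ) * ∫ p, sampleLoss cτ (G p.1) p.2 ∂(P.prod D) := by
      rw [integral_prod _ hInt1, ← integral_const_mul]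
      simp only [genRisk, integral_const_mul]
    have e2 : ∫ S, empRisk cτ (G S) S ∂P = 1 / ((m:ℝ) * n) *
        ∑ i, ∫ p, sampleLoss cτ (G (Function.update p.1 i p.2)) p.2 ∂(P.prod D) := by
      simp only [empRisk]
      rw [integral_const_mul, integral_finsetSum _ fun i _ => hInt3 i]
      congr 1
      refine Finset.sum_congr rfl fun i _ => ?_
      have mp : MeasurePreserving (fun p : (Fin m → X × (Fin n → ℝ)) × (X × (Fin n → ℝ)) =>
        Function.update p.1 i p.2) (P.prod D) P := update_mp D m i
      have h3 := (hInt3 i).aestronglyMeasurable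
      rw [← mp.map_eq] at h3
      have e := integral_map mp.aemeasurable h3
      rw [mp.map_eq] at e
      rw [e]
      simp
    have key : ∀ i, (∫ p, sampleLoss cτ (G p.1) p.2 ∂(P.prod D))
        - ∫ p, sampleLoss cτ (G (Function.update p.1 i p.2)) p.2 ∂(P.prod D)
        ≤ n * (2 * τ * Δbar) := by
      intro i
      rw [← integral_sub hInt1 (hInt2 i)]
      refine (integral_mono (hInt1.sub (hInt2 i)) (integrable_const (n * (2 * τ * Δbar)))
        fun p => (abs_le.1 (hpt p.1 i p.2 p.2)).2).trans (by simp)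
    have ks := Finset.sum_le_card_nsmul Finset.univ _ _ fun i _ => key i
    rw [Finset.sum_sub_distrib] at ks
    simp only [Finset.sum_const, Finset.card_univ, Fintype.card_fin, nsmul_eq_mul] at ks
    rw [e1, e2]
    generalize (∫ p, sampleLoss cτ (G p.1) p.2 ∂(P.prod D)) = A at *
    generalize (∑ i, ∫ p, sampleLoss cτ (G (Function.update p.1 i p.2)) p.2 ∂(P.prod D)) = B at *
    have : 1 / (n:ℝ) * A - 1 / ((m:ℝ) * n) * B = (m * A - B) / (m * n) := by field_simp
    rw [this, div_le_iff₀ (by positivity)]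
    linarith
  have := mcdiarmid_tail D _ m hm _ hmeas hdiff δ hδ _ hexp
  refine this.trans (measure_mono ?_)
  intro S hS
  simp only [Set.mem_ofPred_eq] at hS ⊢
  rw [mul_div_cancel₀ _ hm'.ne'] at hS
  linarith
end
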